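/- Let 0 < p ≤ 1 and let f be a smooth nonnegative function on ℝⁿ × (0,1] satisfying ∂ₜ f ≤ Δ f pointwise, with f(·,t) → 0 in L²_loc(ℝⁿ) as t → 0⁺. If there is a constant C such that the Lᵖ norm of f over B(0,r) × [0,1] satisfies ‖f‖_{Lᵖ(B(0,r)×[0,1])} ≤ e^{C r} for every r > 0, then f ≡ 0 on ℝⁿ × (0,1]. -/

import Mathlib

open MeasureTheory Filter Set Metric

/-- The Euclidean Laplacian of `g : ℝⁿ → ℝ`. -/
noncomputable def heatLap {n : ℕ} (g : EuclideanSpace ℝ (Fin n) → ℝ)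
    (x : EuclideanSpace ℝ (Fin n)) : ℝ :=
  ∑ i : Fin n, fderiv ℝ (fun y => fderiv ℝ g y (EuclideanSpace.single i (1 : ℝ))) x
    (EuclideanSpace.single i (1 : ℝ))

section

variable {n : ℕ}

theorem integral_heatLap_mul {g ψ : EuclideanSpace ℝ (Fin n) → ℝ} (hg : ContDiff ℝ 2 g)
    (hψ : ContDiff ℝ 2 ψ) (hc : HasCompactSupport ψ) :
    ∫ x, heatLap g x * ψ x = ∫ x, g x * heatLap ψ x := by
  have hderiv : ∀ {u : EuclideanSpace ℝ (Fin n) → ℝ}, ContDiff ℝ 2 u → ∀ v,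
      ContDiff ℝ 1 fun y => fderiv ℝ u y v := fun hu v =>
    (hu.fderiv_right (m := 1) (by norm_num)).clm_apply contDiff_const
  have hderiv' : ∀ {u : EuclideanSpace ℝ (Fin n) → ℝ}, ContDiff ℝ 1 u → ∀ v,
      Continuous fun y => fderiv ℝ u y v := fun hu v =>
    (hu.continuous_fderiv (by norm_num)).clm_apply continuous_const
  have hint : ∀ {u w : EuclideanSpace ℝ (Fin n) → ℝ}, Continuous u → Continuous w →
      HasCompactSupport w → Integrable fun x => u x * w x := fun hu hw hcw =>
    (hu.mul hw).integrable_of_hasCompactSupport hcw.mul_left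
  have hψc := hψ.continuous
  have key : ∀ v, ∫ x, fderiv ℝ (fun y => fderiv ℝ g y v) x v * ψ x
      = ∫ x, g x * fderiv ℝ (fun y => fderiv ℝ ψ y v) x v := by
    intro v
    have h1 := integral_mul_fderiv_eq_neg_fderiv_mul_of_integrable
      (μ := (volume : Measure (EuclideanSpace ℝ (Fin n)))) (v := v)
      (hint (hderiv' (hderiv hg v) v) hψc hc)
      (hint (hderiv hg v).continuous (hderiv hψ v).continuous (hc.fderiv_apply (𝕜 := ℝ) v))
      (hint (hderiv hg v).continuous hψc hc)
      (fun x _ => (hderiv hg v).differentiable (by norm_num) x)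
      (fun x _ => hψ.differentiable (by norm_num) x)
    have h2 := integral_mul_fderiv_eq_neg_fderiv_mul_of_integrable
      (μ := (volume : Measure (EuclideanSpace ℝ (Fin n)))) (v := v)
      (hint (hderiv hg v).continuous (hderiv hψ v).continuous (hc.fderiv_apply (𝕜 := ℝ) v))
      (hint hg.continuous (hderiv' (hderiv hψ v) v)
        ((hc.fderiv_apply (𝕜 := ℝ) v).fderiv_apply (𝕜 := ℝ) v))
      (hint hg.continuous (hderiv hψ v).continuous (hc.fderiv_apply (𝕜 := ℝ) v))
      (fun x _ => hg.differentiable (by norm_num) x)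
      (fun x _ => (hderiv hψ v).differentiable (by norm_num) x)
    rw [h2, h1, neg_neg]
  simp only [heatLap, Finset.sum_mul, Finset.mul_sum]
  rw [integral_finsetSum, integral_finsetSum]
  · exact Finset.sum_congr rfl fun i _ => key _
  · exact fun i _ => hint hg.continuous (hderiv' (hderiv hψ _) _)
      ((hc.fderiv_apply (𝕜 := ℝ) _).fderiv_apply (𝕜 := ℝ) _)
  · exact fun i _ => hint (hderiv' (hderiv hg _) _) hψc hc

theorem continuous_heatLap {g : EuclideanSpace ℝ (Fin n) → ℝ} (hg : ContDiff ℝ 2 g) :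
    Continuous (heatLap g) :=
  continuous_finsetSum _ fun _ _ =>
    ((((hg.fderiv_right (m := 1) (by norm_num)).clm_apply contDiff_const).continuous_fderiv
      (by norm_num)).clm_apply continuous_const)

theorem heatLap_eq_zero_of_eventuallyEq {g : EuclideanSpace ℝ (Fin n) → ℝ}
    {x : EuclideanSpace ℝ (Fin n)} (h : g =ᶠ[nhds x] 0) : heatLap g x = 0 := by
  refine Finset.sum_eq_zero fun i _ => ?_
  have : (fun y => fderiv ℝ g y (EuclideanSpace.single i (1 : ℝ))) =ᶠ[nhds x] fun _ => 0 := by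
    filter_upwards [h.fderiv (𝕜 := ℝ)] with y hy
    simp [hy]
  rw [this.fderiv_eq]
  simp

section SpaceTime

variable {T : ℝ} {u : ℝ → EuclideanSpace ℝ (Fin n) → ℝ}

theorem hasDerivAt_of_contDiffOn
    (hu : ContDiffOn ℝ (⊤ : ℕ∞) (fun q : ℝ × EuclideanSpace ℝ (Fin n) => u q.1 q.2)
      (Ioo 0 T ×ˢ univ)) {t : ℝ} (ht : t ∈ Ioo 0 T) (x : EuclideanSpace ℝ (Fin n)) :
    HasDerivAt (fun s => u s x)
      (fderiv ℝ (fun q : ℝ × EuclideanSpace ℝ (Fin n) => u q.1 q.2) (t, x) (1, 0)) t := by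
  have h := (hu.contDiffAt ((isOpen_Ioo.prod isOpen_univ).mem_nhds
    (show (t, x) ∈ _ from ⟨ht, mem_univ x⟩))).differentiableAt (by simp)
  have h2 : HasDerivAt (fun s : ℝ => (s, x)) ((1 : ℝ), (0 : EuclideanSpace ℝ (Fin n))) t :=
    (hasDerivAt_id t).prodMk (hasDerivAt_const t x)
  exact HasFDerivAt.comp_hasDerivAt t h.hasFDerivAt h2

theorem contDiff_slice
    (hu : ContDiffOn ℝ (⊤ : ℕ∞) (fun q : ℝ × EuclideanSpace ℝ (Fin n) => u q.1 q.2)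
      (Ioo 0 T ×ˢ univ)) {t : ℝ} (ht : t ∈ Ioo 0 T) : ContDiff ℝ (⊤ : ℕ∞) (u t) := by
  rw [← contDiffOn_univ]
  exact hu.comp (g := fun q : ℝ × EuclideanSpace ℝ (Fin n) => u q.1 q.2)
    (f := fun y => (t, y)) (contDiff_const.prodMk contDiff_id).contDiffOn
    fun y _ => ⟨ht, mem_univ y⟩

theorem continuousOn_deriv_of_contDiffOn
    (hu : ContDiffOn ℝ (⊤ : ℕ∞) (fun q : ℝ × EuclideanSpace ℝ (Fin n) => u q.1 q.2)
      (Ioo 0 T ×ˢ univ)) :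
    ContinuousOn (fun q : ℝ × EuclideanSpace ℝ (Fin n) => deriv (fun s => u s q.2) q.1)
      (Ioo 0 T ×ˢ univ) := by
  refine ContinuousOn.congr ((hu.continuousOn_fderiv_of_isOpen (isOpen_Ioo.prod isOpen_univ)
    (by simp)).clm_apply
    (continuousOn_const (c := ((1 : ℝ), (0 : EuclideanSpace ℝ (Fin n)))))) fun q hq => ?_
  exact (hasDerivAt_of_contDiffOn hu hq.1 q.2).deriv

theorem integral_mul_sub_integral_mul_le {ψ : ℝ → EuclideanSpace ℝ (Fin n) → ℝ}
    (hu : ContDiffOn ℝ (⊤ : ℕ∞) (fun q : ℝ × EuclideanSpace ℝ (Fin n) => u q.1 q.2)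
      (Ioo 0 T ×ˢ univ))
    (hψ : ContDiffOn ℝ (⊤ : ℕ∞) (fun q : ℝ × EuclideanSpace ℝ (Fin n) => ψ q.1 q.2)
      (Ioo 0 T ×ˢ univ))
    (hu0 : ∀ t ∈ Ioo 0 T, ∀ x, 0 ≤ u t x) (hψ0 : ∀ t ∈ Ioo 0 T, ∀ x, 0 ≤ ψ t x)
    (hsub : ∀ t ∈ Ioo 0 T, ∀ x, deriv (fun s => u s x) t ≤ heatLap (u t) x)
    {x₀ : EuclideanSpace ℝ (Fin n)} {R : ℝ}
    (hsupp : ∀ t ∈ Ioo 0 T, ∀ x ∉ closedBall x₀ R, ψ t x = 0)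
    {κ : ℝ} (hκ : ∀ t ∈ Ioo 0 T, ∀ x, deriv (fun s => ψ s x) t + heatLap (ψ t) x ≤ κ)
    {a b : ℝ} (ha : 0 < a) (hab : a ≤ b) (hb : b < T) :
    (∫ x, u b x * ψ b x) - ∫ x, u a x * ψ a x
      ≤ κ * ∫ t in a..b, ∫ x in closedBall x₀ R, u t x := by
  set Q := closedBall x₀ R with hQ
  have hQc : IsCompact Q := isCompact_closedBall _ _
  have hIcc : Icc a b ⊆ Ioo 0 T := fun s hs => ⟨ha.trans_le hs.1, hs.2.trans_lt hb⟩
  have hsubset : Icc a b ×ˢ Q ⊆ Ioo 0 T ×ˢ univ := prod_mono hIcc (subset_univ _)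
  have hintp : ∀ w : ℝ × EuclideanSpace ℝ (Fin n) → ℝ, ContinuousOn w (Ioo 0 T ×ˢ univ) →
      Integrable w ((volume.restrict (Ioc a b)).prod (volume.restrict Q)) := by
    intro w hw
    rw [Measure.prod_restrict]
    exact ((hw.mono hsubset).integrableOn_compact (isCompact_Icc.prod hQc)).mono_set
      (prod_mono Ioc_subset_Icc_self subset_rfl)
  have hh := hu.mul hψ
  set D : ℝ → EuclideanSpace ℝ (Fin n) → ℝ := fun t x => deriv (fun s => u s x * ψ s x) t with hD
  have hDc := continuousOn_deriv_of_contDiffOn (u := fun s x => u s x * ψ s x) hh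
  have hDint := hintp _ hDc
  have huint := hintp _ hu.continuousOn
  have hslice : ∀ t ∈ Ioo 0 T, ∀ w : ℝ × EuclideanSpace ℝ (Fin n) → ℝ,
      ContinuousOn w (Ioo 0 T ×ˢ univ) → Continuous fun x => w (t, x) := by
    intro t ht w hw
    rw [← continuousOn_univ]
    exact hw.comp (continuous_const.prodMk continuous_id).continuousOn fun y _ => ⟨ht, mem_univ y⟩
  have hprod : ∀ t ∈ Ioo 0 T, IntegrableOn (fun x => u t x * ψ t x) Q := fun t ht =>
    (hslice t ht _ hh.continuousOn).continuousOn.integrableOn_compact hQc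
  have hset : ∀ t ∈ Ioo 0 T, ∫ x, u t x * ψ t x = ∫ x in Q, u t x * ψ t x := fun t ht =>
    (setIntegral_eq_integral_of_forall_compl_eq_zero
      fun x hx => by rw [hsupp t ht x hx, mul_zero]).symm
  have hbm : b ∈ Ioo 0 T := hIcc ⟨hab, le_rfl⟩
  have ham : a ∈ Ioo 0 T := hIcc ⟨le_rfl, hab⟩
  have hftc : ∀ x, u b x * ψ b x - u a x * ψ a x = ∫ t in a..b, D t x := by
    intro x
    rw [intervalIntegral.integral_eq_sub_of_hasDerivAt (f := fun s => u s x * ψ s x)]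
    · intro t ht
      rw [uIcc_of_le hab] at ht
      have := hasDerivAt_of_contDiffOn (u := fun s x => u s x * ψ s x) hh (hIcc ht) x
      exact this.differentiableAt.hasDerivAt
    · refine ContinuousOn.intervalIntegrable ?_
      rw [uIcc_of_le hab]
      exact hDc.comp (f := fun t => (t, x)) (continuous_id.prodMk continuous_const).continuousOn
        fun t ht => ⟨hIcc ht, mem_univ x⟩
  rw [hset b hbm, hset a ham, ← integral_sub (hprod b hbm) (hprod a ham)]
  simp_rw [hftc]
  rw [← intervalIntegral_integral_swap (by rwa [uIoc_of_le hab]),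
    ← intervalIntegral.integral_const_mul]
  refine intervalIntegral.integral_mono_on hab ?_ ?_ fun t ht => ?_
  · rw [intervalIntegrable_iff_integrableOn_Ioc_of_le hab]
    exact hDint.integral_prod_left
  · rw [intervalIntegrable_iff_integrableOn_Ioc_of_le hab]
    exact huint.integral_prod_left.const_mul κ
  have htm := hIcc ht
  have hψt := contDiff_slice hψ htm
  have hut := contDiff_slice hu htm
  have two_le : (2 : WithTop ℕ∞) ≤ ((⊤ : ℕ∞) : WithTop ℕ∞) :=
    WithTop.coe_le_coe.2 (le_top : (2 : ℕ∞) ≤ ⊤)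
  have hψ2 := hψt.of_le two_le
  have hu2 := hut.of_le two_le
  have hψL := continuous_heatLap hψ2
  have huL := continuous_heatLap hu2
  have hψd : Continuous fun x => deriv (fun s => ψ s x) t :=
    hslice t htm _ (continuousOn_deriv_of_contDiffOn hψ)
  have hQi : ∀ w : EuclideanSpace ℝ (Fin n) → ℝ, Continuous w → IntegrableOn w Q := fun w hw =>
    hw.continuousOn.integrableOn_compact hQc
  have hparts : ∫ x in Q, heatLap (u t) x * ψ t x = ∫ x in Q, u t x * heatLap (ψ t) x := by
    rw [setIntegral_eq_integral_of_forall_compl_eq_zero,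
      setIntegral_eq_integral_of_forall_compl_eq_zero]
    · exact integral_heatLap_mul hu2
        hψ2 (HasCompactSupport.intro hQc (hsupp t htm))
    · intro x hx
      rw [heatLap_eq_zero_of_eventuallyEq, mul_zero]
      filter_upwards [isClosed_closedBall.isOpen_compl.mem_nhds hx] with y hy using hsupp t htm y hy
    · exact fun x hx => by rw [hsupp t htm x hx, mul_zero]
  calc ∫ x in Q, D t x
      ≤ ∫ x in Q, (heatLap (u t) x * ψ t x + u t x * deriv (fun s => ψ s x) t) := by
        refine setIntegral_mono (hQi _ (hslice t htm _ hDc))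
          (hQi _ ((huL.mul hψt.continuous).add (hut.continuous.mul hψd))) fun x => ?_
        have e : D t x = deriv (fun s => u s x) t * ψ t x + u t x * deriv (fun s => ψ s x) t :=
          ((hasDerivAt_of_contDiffOn hu htm x).differentiableAt.hasDerivAt.mul
            (hasDerivAt_of_contDiffOn hψ htm x).differentiableAt.hasDerivAt).deriv
        simp only [e]
        gcongr
        · exact hψ0 t htm x
        · exact hsub t htm x
    _ = ∫ x in Q, u t x * (deriv (fun s => ψ s x) t + heatLap (ψ t) x) := by
        have i₁ : IntegrableOn (fun x => u t x * deriv (fun s => ψ s x) t) Q :=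
          hQi _ (hut.continuous.mul hψd)
        have i₂ : IntegrableOn (fun x => heatLap (u t) x * ψ t x) Q :=
          hQi _ (huL.mul hψt.continuous)
        have i₃ : IntegrableOn (fun x => u t x * heatLap (ψ t) x) Q :=
          hQi _ (hut.continuous.mul hψL)
        rw [integral_add i₂ i₁, hparts, ← integral_add i₃ i₁]
        exact integral_congr_ae (Eventually.of_forall fun x => by ring)
    _ ≤ ∫ x in Q, κ * u t x := by
        refine setIntegral_mono (hQi _ (hut.continuous.mul (hψd.add hψL)))
          (hQi _ (hut.continuous.const_mul κ)) fun x => ?_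
        simp only
        rw [mul_comm κ]
        exact mul_le_mul_of_nonneg_left (hκ t htm x) (hu0 t htm x)
    _ = κ * ∫ x in Q, u t x := integral_const_mul _ _

end SpaceTime

/-- The unnormalised Gaussian heat kernel of `ℝⁿ` centred at `x₀`. -/
noncomputable def gaussKernel (x₀ : EuclideanSpace ℝ (Fin n)) (τ : ℝ)
    (x : EuclideanSpace ℝ (Fin n)) : ℝ :=
  τ ^ (-(n / 2 : ℝ)) * Real.exp (-(‖x - x₀‖ ^ 2 / (4 * τ)))

theorem gaussKernel_nonneg (x₀ : EuclideanSpace ℝ (Fin n)) {τ : ℝ} (hτ : 0 < τ)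
    (x : EuclideanSpace ℝ (Fin n)) : 0 ≤ gaussKernel x₀ τ x := by
  unfold gaussKernel; positivity

theorem hasDerivAt_gaussKernel (x₀ : EuclideanSpace ℝ (Fin n)) {τ : ℝ} (hτ : 0 < τ)
    (x : EuclideanSpace ℝ (Fin n)) :
    HasDerivAt (fun τ => gaussKernel x₀ τ x)
      ((‖x - x₀‖ ^ 2 / (4 * τ ^ 2) - n / (2 * τ)) * gaussKernel x₀ τ x) τ := by
  have h1 : HasDerivAt (fun τ : ℝ => τ ^ (-(n / 2 : ℝ)))
      (-(n / 2 : ℝ) * τ ^ (-(n / 2 : ℝ) - 1)) τ :=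
    Real.hasDerivAt_rpow_const (Or.inl hτ.ne')
  have h2 : HasDerivAt (fun τ : ℝ => -(‖x - x₀‖ ^ 2 / (4 * τ)))
      (‖x - x₀‖ ^ 2 / (4 * τ ^ 2)) τ := by
    have := (((hasDerivAt_id τ).const_mul 4).inv (by simp [hτ.ne'])).const_mul (-‖x - x₀‖ ^ 2)
    convert! this using 1
    · ext s; simp [div_eq_mul_inv]
    · simp only [id]; field_simp
  convert! h1.mul h2.exp using 1
  rw [Real.rpow_sub_one hτ.ne']
  unfold gaussKernel
  field_simp
  ring

theorem contDiffOn_gaussKernel (x₀ : EuclideanSpace ℝ (Fin n)) :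
    ContDiffOn ℝ (⊤ : ℕ∞) (fun q : ℝ × EuclideanSpace ℝ (Fin n) => gaussKernel x₀ q.1 q.2)
      (Ioi 0 ×ˢ univ) := by
  intro q hq
  have hq0 : q.1 ≠ 0 := ne_of_gt hq.1
  refine ContDiffAt.contDiffWithinAt (ContDiffAt.mul ?_ (ContDiffAt.exp (ContDiffAt.neg ?_)))
  · exact (contDiffAt_fst).rpow_const_of_ne hq0
  · refine ContDiffAt.div ((contDiffAt_snd.sub contDiffAt_const).norm_sq ℝ)
      (contDiffAt_const.mul contDiffAt_fst) ?_
    simpa using hq0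

theorem hasFDerivAt_gaussKernel (x₀ : EuclideanSpace ℝ (Fin n)) {τ : ℝ} (hτ : 0 < τ)
    (x : EuclideanSpace ℝ (Fin n)) :
    HasFDerivAt (gaussKernel x₀ τ)
      ((-(gaussKernel x₀ τ x / (2 * τ))) • innerSL ℝ (x - x₀)) x := by
  have h1 : HasFDerivAt (fun y : EuclideanSpace ℝ (Fin n) => ‖y - x₀‖ ^ 2)
      (2 • innerSL ℝ (x - x₀)) x := by
    have := ((hasFDerivAt_id x).sub_const x₀).norm_sq
    simpa using this
  have h2 := ((h1.const_mul (-(4 * τ)⁻¹)).exp).const_mul (τ ^ (-(n / 2 : ℝ)))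
  convert! h2 using 1
  · ext y
    simp only [gaussKernel]
    congr 2
    field_simp
  · ext v
    simp only [gaussKernel, div_eq_mul_inv, smul_apply, smul_eq_mul]
    rw [show -(‖x - x₀‖ ^ 2 * (4 * τ)⁻¹) = -(4 * τ)⁻¹ * ‖x - x₀‖ ^ 2 by ring]
    simp only [nsmul_eq_mul, Nat.cast_ofNat]
    field_simp
    ring

theorem heatLap_gaussKernel (x₀ : EuclideanSpace ℝ (Fin n)) {τ : ℝ} (hτ : 0 < τ)
    (x : EuclideanSpace ℝ (Fin n)) :
    heatLap (gaussKernel x₀ τ) x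
      = (‖x - x₀‖ ^ 2 / (4 * τ ^ 2) - n / (2 * τ)) * gaussKernel x₀ τ x := by
  have hfd : ∀ i : Fin n,
      fderiv ℝ (fun y => fderiv ℝ (gaussKernel x₀ τ) y (EuclideanSpace.single i (1 : ℝ))) x
        (EuclideanSpace.single i (1 : ℝ))
      = ((x - x₀) i ^ 2 / (4 * τ ^ 2) - 1 / (2 * τ)) * gaussKernel x₀ τ x := by
    intro i
    have e : (fun y => fderiv ℝ (gaussKernel x₀ τ) y (EuclideanSpace.single i (1 : ℝ)))
        = fun y => -(2 * τ)⁻¹ * (gaussKernel x₀ τ y *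
          innerSL ℝ (EuclideanSpace.single i (1 : ℝ)) (y - x₀)) := by
      ext y
      rw [(hasFDerivAt_gaussKernel x₀ hτ y).fderiv]
      rw [smul_apply, smul_eq_mul, innerSL_apply_apply, innerSL_apply_apply, real_inner_comm]
      ring
    have h1 : HasFDerivAt (fun y => innerSL ℝ (EuclideanSpace.single i (1 : ℝ)) (y - x₀))
        (innerSL ℝ (EuclideanSpace.single i (1 : ℝ))) x :=
      (innerSL ℝ (EuclideanSpace.single i (1 : ℝ))).hasFDerivAt.comp x
        ((hasFDerivAt_id x).sub_const x₀)
    rw [e, (((hasFDerivAt_gaussKernel x₀ hτ x).fun_mul h1).const_mul (-(2 * τ)⁻¹)).fderiv]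
    simp [EuclideanSpace.inner_single_left, EuclideanSpace.inner_single_right]
    field_simp
    ring
  simp only [heatLap, hfd, ← Finset.sum_mul]
  rw [Finset.sum_sub_distrib, ← Finset.sum_div, EuclideanSpace.real_norm_sq_eq]
  simp
  left
  field_simp

theorem heatLap_mul {g h : EuclideanSpace ℝ (Fin n) → ℝ} (hg : ContDiff ℝ 2 g)
    (hh : ContDiff ℝ 2 h) (x : EuclideanSpace ℝ (Fin n)) :
    heatLap (fun y => g y * h y) x = heatLap g x * h x
      + 2 * (∑ i : Fin n, fderiv ℝ g x (EuclideanSpace.single i (1 : ℝ)) *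
          fderiv ℝ h x (EuclideanSpace.single i (1 : ℝ))) + g x * heatLap h x := by
  have hd : ∀ {u : EuclideanSpace ℝ (Fin n) → ℝ}, ContDiff ℝ 2 u → ∀ y, DifferentiableAt ℝ u y :=
    fun hu y => hu.differentiable (by norm_num) y
  have hd' : ∀ {u : EuclideanSpace ℝ (Fin n) → ℝ}, ContDiff ℝ 2 u → ∀ v y,
      DifferentiableAt ℝ (fun y => fderiv ℝ u y v) y := fun hu v y =>
    ((hu.fderiv_right (m := 1) (by norm_num)).clm_apply contDiff_const).differentiable
      (by norm_num) y
  simp only [heatLap, Finset.sum_mul, Finset.mul_sum, ← Finset.sum_add_distrib]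
  refine Finset.sum_congr rfl fun i _ => ?_
  set v := EuclideanSpace.single i (1 : ℝ)
  have e : (fun y => fderiv ℝ (fun y => g y * h y) y v)
      = fun y => g y * fderiv ℝ h y v + h y * fderiv ℝ g y v := by
    ext y
    rw [fderiv_fun_mul (hd hg y) (hd hh y)]
    simp
  rw [e, fderiv_fun_add ((hd hg x).fun_mul (hd' hh v x)) ((hd hh x).fun_mul (hd' hg v x)),
    fderiv_fun_mul (hd hg x) (hd' hh v x), fderiv_fun_mul (hd hh x) (hd' hg v x)]
  simp
  ring

theorem fderiv_comp_smul_sub {η : EuclideanSpace ℝ (Fin n) → ℝ} (hη : Differentiable ℝ η)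
    (x₀ : EuclideanSpace ℝ (Fin n)) (c : ℝ) (x v : EuclideanSpace ℝ (Fin n)) :
    fderiv ℝ (fun y => η (c • (y - x₀))) x v = c * fderiv ℝ η (c • (x - x₀)) v := by
  have h1 : HasFDerivAt (fun y : EuclideanSpace ℝ (Fin n) => c • (y - x₀))
      (c • ContinuousLinearMap.id ℝ (EuclideanSpace ℝ (Fin n))) x :=
    ((hasFDerivAt_id x).sub_const x₀).const_smul c
  have h2 := (hη (c • (x - x₀))).hasFDerivAt.comp x h1
  have h3 : fderiv ℝ (fun y => η (c • (y - x₀))) x = _ := h2.fderiv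
  rw [h3]
  simp

theorem heatLap_comp_smul_sub {η : EuclideanSpace ℝ (Fin n) → ℝ} (hη : ContDiff ℝ 2 η)
    (x₀ : EuclideanSpace ℝ (Fin n)) (c : ℝ) (x : EuclideanSpace ℝ (Fin n)) :
    heatLap (fun y => η (c • (y - x₀))) x = c ^ 2 * heatLap η (c • (x - x₀)) := by
  simp only [heatLap, Finset.mul_sum]
  refine Finset.sum_congr rfl fun i _ => ?_
  set v := EuclideanSpace.single i (1 : ℝ)
  have hd : Differentiable ℝ fun y => fderiv ℝ η y v :=
    ((hη.fderiv_right (m := 1) (by norm_num)).clm_apply contDiff_const).differentiable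
      (by norm_num)
  have e : (fun y => fderiv ℝ (fun y => η (c • (y - x₀))) y v)
      = fun y => c * fderiv ℝ η (c • (y - x₀)) v :=
    funext fun y => fderiv_comp_smul_sub (hη.differentiable (by norm_num)) x₀ c y v
  have hd2 : DifferentiableAt ℝ (fun y => fderiv ℝ η (c • (y - x₀)) v) x :=
    (hd _).comp x ((differentiableAt_id.sub_const x₀).const_smul c)
  rw [e, fderiv_const_mul hd2, smul_apply, smul_eq_mul,
    fderiv_comp_smul_sub (η := fun y => fderiv ℝ η y v) hd]
  ring

theorem sum_fderiv_mul_fderiv_gaussKernel (g : EuclideanSpace ℝ (Fin n) → ℝ)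
    (x₀ : EuclideanSpace ℝ (Fin n)) {τ : ℝ} (hτ : 0 < τ) (x : EuclideanSpace ℝ (Fin n)) :
    ∑ i : Fin n, fderiv ℝ g x (EuclideanSpace.single i (1 : ℝ)) *
        fderiv ℝ (gaussKernel x₀ τ) x (EuclideanSpace.single i (1 : ℝ))
      = -(gaussKernel x₀ τ x / (2 * τ)) * fderiv ℝ g x (x - x₀) := by
  have hw : x - x₀ = ∑ i : Fin n, (x - x₀) i • EuclideanSpace.single i (1 : ℝ) := by
    have := (EuclideanSpace.basisFun (Fin n) ℝ).sum_repr (x - x₀)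
    simpa using this.symm
  conv_rhs => rw [hw, map_sum, Finset.mul_sum]
  refine Finset.sum_congr rfl fun i _ => ?_
  rw [(hasFDerivAt_gaussKernel x₀ hτ x).fderiv]
  simp [EuclideanSpace.inner_single_right]
  ring

theorem exists_rpow_mul_exp_le {m : ℝ} (hm : 0 ≤ m) :
    ∃ K : ℝ, 0 < K ∧ ∀ v : ℝ, 0 < v → v ^ m * Real.exp (-(v / 128)) ≤ K := by
  obtain ⟨N, hN⟩ := exists_nat_ge m
  refine ⟨128 ^ N * N.factorial * Real.exp (1 / 128), by positivity, fun v hv => ?_⟩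
  have h1 : v ^ m ≤ (1 + v) ^ N :=
    calc v ^ m ≤ (1 + v) ^ m := Real.rpow_le_rpow hv.le (by linarith) hm
      _ ≤ (1 + v) ^ (N : ℝ) := Real.rpow_le_rpow_of_exponent_le (by linarith) hN
      _ = (1 + v) ^ N := Real.rpow_natCast _ _
  have h2 : (1 + v) ^ N ≤ 128 ^ N * N.factorial * Real.exp ((1 + v) / 128) := by
    have h := Real.pow_div_factorial_le_exp ((1 + v) / 128) (by positivity) N
    rw [div_le_iff₀ (by positivity), div_pow, div_le_iff₀ (by positivity)] at h
    linarith
  calc v ^ m * Real.exp (-(v / 128))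
      ≤ 128 ^ N * N.factorial * Real.exp ((1 + v) / 128) * Real.exp (-(v / 128)) := by
        gcongr
        exact h1.trans h2
    _ = 128 ^ N * N.factorial * Real.exp (1 / 128) := by
        rw [mul_assoc, ← Real.exp_add]
        congr 2
        ring

theorem exists_cutoff (n : ℕ) : ∃ η : EuclideanSpace ℝ (Fin n) → ℝ, ∃ M : ℝ,
    ContDiff ℝ (⊤ : ℕ∞) η ∧ 0 ≤ M ∧ (∀ z, 0 ≤ η z) ∧ (∀ z, η z ≤ 1) ∧
    (∀ z, ‖z‖ ≤ 1 / 4 → η z = 1) ∧ (∀ z, 1 / 2 ≤ ‖z‖ → η z = 0) ∧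
    (∀ z, |heatLap η z| ≤ M) ∧ (∀ z, |fderiv ℝ η z z| ≤ M) ∧
    (∀ z, ‖z‖ < 1 / 4 → heatLap η z = 0) ∧ (∀ z, ‖z‖ < 1 / 4 → fderiv ℝ η z z = 0) := by
  let η : ContDiffBump (0 : EuclideanSpace ℝ (Fin n)) := ⟨1 / 4, 1 / 2, by norm_num, by norm_num⟩
  have hη : ContDiff ℝ (⊤ : ℕ∞) η := η.contDiff
  have two_le : (2 : WithTop ℕ∞) ≤ ((⊤ : ℕ∞) : WithTop ℕ∞) :=
    WithTop.coe_le_coe.2 (le_top : (2 : ℕ∞) ≤ ⊤)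
  have hcpt : HasCompactSupport η := η.hasCompactSupport
  have hout : ∀ z, z ∉ tsupport η → (η : EuclideanSpace ℝ (Fin n) → ℝ) =ᶠ[nhds z] 0 :=
    fun z hz => notMem_tsupport_iff_eventuallyEq.1 hz
  have hin : ∀ z, ‖z‖ < 1 / 4 → (η : EuclideanSpace ℝ (Fin n) → ℝ) =ᶠ[nhds z] 1 :=
    fun z hz => η.eventuallyEq_one_of_mem_ball (by simpa [η] using hz)
  obtain ⟨M₁, hM₁⟩ := (continuous_heatLap (hη.of_le two_le)).bounded_above_of_compact_support
    (HasCompactSupport.intro hcpt fun z hz => heatLap_eq_zero_of_eventuallyEq (hout z hz))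
  obtain ⟨M₂, hM₂⟩ := ((hη.continuous_fderiv (by simp)).clm_apply
    continuous_id).bounded_above_of_compact_support (HasCompactSupport.intro hcpt fun z hz => by
      rw [(hout z hz).fderiv_eq]; simp)
  refine ⟨η, max M₁ M₂, hη, ?_, fun z => η.nonneg, fun z => η.le_one, fun z hz => ?_,
    fun z hz => ?_, fun z => ?_, fun z => ?_, fun z hz => ?_, fun z hz => ?_⟩
  · exact (norm_nonneg _).trans ((hM₁ 0).trans (le_max_left _ _))
  · exact η.one_of_mem_closedBall (by simpa [η] using hz)
  · exact η.zero_of_le_dist (by simpa [η] using hz)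
  · exact (hM₁ z).trans (le_max_left _ _)
  · exact (hM₂ z).trans (le_max_right _ _)
  · refine Finset.sum_eq_zero fun i _ => ?_
    have : (fun y => fderiv ℝ η y (EuclideanSpace.single i (1 : ℝ))) =ᶠ[nhds z] fun _ => 0 := by
      filter_upwards [(hin z hz).fderiv (𝕜 := ℝ)] with y hy
      rw [hy]
      simp [Pi.one_def]
    rw [this.fderiv_eq]
    simp
  · rw [(hin z hz).fderiv_eq]
    simp [Pi.one_def]

theorem exists_gaussian_profile_le (n : ℕ) : ∃ K : ℝ, 0 < K ∧ ∀ R τ r : ℝ, 0 < R → 0 < τ →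
    τ ≤ 1 → R / 4 ≤ r →
    τ ^ (-(n / 2 : ℝ)) * Real.exp (-(r ^ 2 / (4 * τ))) * ((R ^ 2)⁻¹ + τ⁻¹)
      ≤ K * ((R ^ (n + 2))⁻¹ * Real.exp (-(R ^ 2 / 128))) := by
  obtain ⟨K₁, hK₁, h₁⟩ := exists_rpow_mul_exp_le (m := (n / 2 : ℝ)) (by positivity)
  obtain ⟨K₂, hK₂, h₂⟩ := exists_rpow_mul_exp_le (m := (n / 2 + 1 : ℝ)) (by positivity)
  refine ⟨K₁ + K₂, by positivity, fun R τ r hR hτ hτ1 hr => ?_⟩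
  set v := R ^ 2 / τ with hv
  have hv0 : 0 < v := by positivity
  have hvR : R ^ 2 ≤ v := by
    rw [hv, le_div_iff₀ hτ]
    nlinarith [sq_nonneg R]
  have hpow : τ ^ (-(n / 2 : ℝ)) = (R ^ n)⁻¹ * v ^ (n / 2 : ℝ) := by
    rw [hv, Real.div_rpow (by positivity) hτ.le, Real.rpow_neg hτ.le, ← Real.rpow_natCast R 2,
      ← Real.rpow_mul hR.le, Nat.cast_ofNat, mul_div_cancel₀ _ (two_ne_zero' ℝ),
      Real.rpow_natCast]
    field_simp
  have hexp : Real.exp (-(r ^ 2 / (4 * τ)))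
      ≤ Real.exp (-(v / 128)) * Real.exp (-(R ^ 2 / 128)) := by
    rw [← Real.exp_add]
    apply Real.exp_le_exp.2
    have h3 : v / 64 ≤ r ^ 2 / (4 * τ) := by
      rw [hv, div_div, div_le_div_iff₀ (by positivity) (by positivity)]
      have : R ^ 2 ≤ 16 * r ^ 2 := by nlinarith
      nlinarith
    linarith
  have hfac : τ ^ (-(n / 2 : ℝ)) * ((R ^ 2)⁻¹ + τ⁻¹)
      = (R ^ (n + 2))⁻¹ * (v ^ (n / 2 : ℝ) + v ^ (n / 2 + 1 : ℝ)) := by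
    rw [hpow, Real.rpow_add_one hv0.ne', hv]
    field_simp
    ring
  calc τ ^ (-(n / 2 : ℝ)) * Real.exp (-(r ^ 2 / (4 * τ))) * ((R ^ 2)⁻¹ + τ⁻¹)
      = (τ ^ (-(n / 2 : ℝ)) * ((R ^ 2)⁻¹ + τ⁻¹)) * Real.exp (-(r ^ 2 / (4 * τ))) := by ring
    _ ≤ ((R ^ (n + 2))⁻¹ * (v ^ (n / 2 : ℝ) + v ^ (n / 2 + 1 : ℝ)))
        * (Real.exp (-(v / 128)) * Real.exp (-(R ^ 2 / 128))) := by
        rw [hfac]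
        gcongr
    _ = ((v ^ (n / 2 : ℝ) * Real.exp (-(v / 128)) + v ^ (n / 2 + 1 : ℝ) * Real.exp (-(v / 128))))
        * ((R ^ (n + 2))⁻¹ * Real.exp (-(R ^ 2 / 128))) := by ring
    _ ≤ _ := by
        gcongr
        · exact h₁ v hv0
        · exact h₂ v hv0

theorem exists_backward_heat_test_le {η : EuclideanSpace ℝ (Fin n) → ℝ} {M : ℝ}
    (hη : ContDiff ℝ (⊤ : ℕ∞) η) (hM : 0 ≤ M)
    (hL : ∀ z, |heatLap η z| ≤ M) (hE : ∀ z, |fderiv ℝ η z z| ≤ M)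
    (hL0 : ∀ z, ‖z‖ < 1 / 4 → heatLap η z = 0)
    (hE0 : ∀ z, ‖z‖ < 1 / 4 → fderiv ℝ η z z = 0) :
    ∃ K : ℝ, 0 < K ∧ ∀ R T : ℝ, 0 < R → T ≤ 1 → ∀ x₀ : EuclideanSpace ℝ (Fin n),
      ∀ t ∈ Ioo 0 T, ∀ x,
        deriv (fun s => η (R⁻¹ • (x - x₀)) * gaussKernel x₀ (T - s) x) t
          + heatLap (fun y => η (R⁻¹ • (y - x₀)) * gaussKernel x₀ (T - t) y) x
        ≤ K * ((R ^ (n + 2))⁻¹ * Real.exp (-(R ^ 2 / 128))) := by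
  obtain ⟨K, hK, hKb⟩ := exists_gaussian_profile_le n
  refine ⟨M * K + 1, by positivity, fun R T hR hT x₀ t ht x => ?_⟩
  have two_le : (2 : WithTop ℕ∞) ≤ ((⊤ : ℕ∞) : WithTop ℕ∞) :=
    WithTop.coe_le_coe.2 (le_top : (2 : ℕ∞) ≤ ⊤)
  have hτ : 0 < T - t := sub_pos.2 ht.2
  have hτ1 : T - t ≤ 1 := by linarith [ht.1]
  set τ := T - t with hτdef
  set z := R⁻¹ • (x - x₀) with hz
  have hη2 : ContDiff ℝ 2 η := hη.of_le two_le
  have hg2 : ContDiff ℝ 2 (gaussKernel x₀ τ) := by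
    rw [← contDiffOn_univ]
    exact ((contDiffOn_gaussKernel x₀).comp (f := fun y => (τ, y))
      (contDiff_const.prodMk contDiff_id).contDiffOn fun y _ => ⟨hτ, mem_univ y⟩).of_le two_le
  have hφ2 : ContDiff ℝ 2 fun y => η (R⁻¹ • (y - x₀)) :=
    hη2.comp ((contDiff_id.sub contDiff_const).const_smul _)
  have hderiv : deriv (fun s => η z * gaussKernel x₀ (T - s) x) t
      = -(η z * ((‖x - x₀‖ ^ 2 / (4 * τ ^ 2) - n / (2 * τ)) * gaussKernel x₀ τ x)) := by
    have h1 : HasDerivAt (fun s : ℝ => T - s) (-1) t := (hasDerivAt_id t).const_sub T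
    have h2 : HasDerivAt (fun s => gaussKernel x₀ (T - s) x) _ t :=
      HasDerivAt.comp (h₂ := fun τ => gaussKernel x₀ τ x) t (hasDerivAt_gaussKernel x₀ hτ x) h1
    rw [(h2.const_mul (η z)).deriv]
    ring
  have hgrad : fderiv ℝ (fun y => η (R⁻¹ • (y - x₀))) x (x - x₀) = fderiv ℝ η z z := by
    rw [fderiv_comp_smul_sub (hη.differentiable (by simp)), ← hz]
    conv_rhs => rw [hz, map_smul, smul_eq_mul, ← hz]
  have hid : deriv (fun s => η z * gaussKernel x₀ (T - s) x) t
          + heatLap (fun y => η (R⁻¹ • (y - x₀)) * gaussKernel x₀ τ y) x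
      = gaussKernel x₀ τ x * ((R ^ 2)⁻¹ * heatLap η z - τ⁻¹ * fderiv ℝ η z z) := by
    rw [hderiv, heatLap_mul hφ2 hg2, sum_fderiv_mul_fderiv_gaussKernel _ _ hτ, hgrad,
      heatLap_gaussKernel _ hτ, heatLap_comp_smul_sub hη2, ← hz]
    field_simp
    ring
  rw [hid]
  have hpos : 0 ≤ (R ^ (n + 2))⁻¹ * Real.exp (-(R ^ 2 / 128)) := by positivity
  by_cases hzr : ‖z‖ < 1 / 4
  · rw [hL0 z hzr, hE0 z hzr]
    simp only [mul_zero, sub_zero]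
    positivity
  · have hr : R / 4 ≤ ‖x - x₀‖ := by
      rw [not_lt, hz, norm_smul, norm_inv, Real.norm_of_nonneg hR.le, inv_mul_eq_div,
        le_div_iff₀ hR] at hzr
      linarith
    have hb := hKb R τ _ hR hτ hτ1 hr
    have hg0 := gaussKernel_nonneg x₀ hτ x
    calc gaussKernel x₀ τ x * ((R ^ 2)⁻¹ * heatLap η z - τ⁻¹ * fderiv ℝ η z z)
        ≤ gaussKernel x₀ τ x * ((R ^ 2)⁻¹ * M + τ⁻¹ * M) := by
          gcongr
          rw [sub_eq_add_neg, ← mul_neg]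
          gcongr
          · exact (le_abs_self _).trans (hL z)
          · exact (neg_le_abs _).trans (hE z)
      _ = M * (gaussKernel x₀ τ x * ((R ^ 2)⁻¹ + τ⁻¹)) := by ring
      _ ≤ M * (K * ((R ^ (n + 2))⁻¹ * Real.exp (-(R ^ 2 / 128)))) := by
          exact mul_le_mul_of_nonneg_left hb hM
      _ ≤ _ := by linarith

/-- Smooth nonnegative subsolutions of the heat equation on `ℝⁿ × (0,1)` with zero initial data
in `L¹_loc`. -/
structure IsHeatSubsolution (f : ℝ → EuclideanSpace ℝ (Fin n) → ℝ) : Prop where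
  contDiffOn : ContDiffOn ℝ (⊤ : ℕ∞) (fun q : ℝ × EuclideanSpace ℝ (Fin n) => f q.1 q.2)
    (Ioo 0 1 ×ˢ univ)
  nonneg : ∀ t ∈ Ioo (0 : ℝ) 1, ∀ x, 0 ≤ f t x
  deriv_le : ∀ t ∈ Ioo (0 : ℝ) 1, ∀ x, deriv (fun s => f s x) t ≤ heatLap (f t) x
  tendsto_zero : ∀ R > (0 : ℝ), Tendsto (fun t => ∫⁻ x in ball (0 : EuclideanSpace ℝ (Fin n)) R,
    ENNReal.ofReal (f t x)) (nhdsWithin 0 (Ioi 0)) (nhds 0)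

theorem ofReal_integral_le_lintegral {α : Type*} [MeasurableSpace α] (μ : Measure α) (g : α → ℝ) :
    ENNReal.ofReal (∫ x, g x ∂μ) ≤ ∫⁻ x, ENNReal.ofReal |g x| ∂μ := by
  refine (ENNReal.ofReal_le_ofReal (le_abs_self _)).trans ?_
  simpa [← ofReal_norm] using enorm_integral_le_lintegral_enorm (μ := μ) g

theorem le_integral_mul_of_gaussKernel_le {A ε : ℝ} (hA : 0 ≤ A) (hε : 0 < ε)
    {x₀ : EuclideanSpace ℝ (Fin n)} {w : EuclideanSpace ℝ (Fin n) → ℝ} (hw : Integrable w)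
    (hw0 : ∀ x, 0 ≤ w x) (hle : ∀ x ∈ ball x₀ √ε, A * gaussKernel x₀ ε x ≤ w x) :
    A * (Real.exp (-(1 / 4)) * volume.real (ball (0 : EuclideanSpace ℝ (Fin n)) 1))
      ≤ ∫ x, w x := by
  have hs : 0 < √ε := Real.sqrt_pos.2 hε
  have hvol : volume.real (ball x₀ √ε)
      = √ε ^ n * volume.real (ball (0 : EuclideanSpace ℝ (Fin n)) 1) := by
    rw [Measure.real, Measure.addHaar_ball_of_pos _ _ hs, ENNReal.toReal_mul,
      ENNReal.toReal_ofReal (by positivity), finrank_euclideanSpace_fin, Measure.real]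
  have hpow : ε ^ (-(n / 2 : ℝ)) * √ε ^ n = 1 := by
    rw [Real.sqrt_eq_rpow, ← Real.rpow_natCast, ← Real.rpow_mul hε.le, ← Real.rpow_add hε]
    convert! Real.rpow_zero ε using 2
    ring
  have hge : ∀ x ∈ ball x₀ √ε, A * (ε ^ (-(n / 2 : ℝ)) * Real.exp (-(1 / 4))) ≤ w x := by
    intro x hx
    refine le_trans ?_ (hle x hx)
    unfold gaussKernel
    refine mul_le_mul_of_nonneg_left (mul_le_mul_of_nonneg_left
      (Real.exp_le_exp.2 (neg_le_neg ?_)) (by positivity)) hA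
    rw [div_le_div_iff₀ (by positivity) (by norm_num)]
    have h1 : ‖x - x₀‖ ^ 2 ≤ √ε ^ 2 := by
      gcongr
      exact (mem_ball_iff_norm.1 hx).le
    rw [Real.sq_sqrt hε.le] at h1
    linarith
  calc A * (Real.exp (-(1 / 4)) * volume.real (ball (0 : EuclideanSpace ℝ (Fin n)) 1))
      = A * (ε ^ (-(n / 2 : ℝ)) * Real.exp (-(1 / 4))) * volume.real (ball x₀ √ε) := by
        rw [hvol]
        linear_combination (-(A * Real.exp (-(1 / 4)) *
          volume.real (ball (0 : EuclideanSpace ℝ (Fin n)) 1))) * hpow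
    _ ≤ ∫ x in ball x₀ √ε, w x :=
        setIntegral_ge_of_const_le_real measurableSet_ball measure_ball_lt_top.ne hge
          hw.integrableOn
    _ ≤ ∫ x, w x := setIntegral_le_integral hw (Eventually.of_forall hw0)

theorem ofReal_integral_mul_le_of_test {f : ℝ → EuclideanSpace ℝ (Fin n) → ℝ}
    (hf : IsHeatSubsolution f) {T : ℝ} (hT : T ≤ 1) {ψ : ℝ → EuclideanSpace ℝ (Fin n) → ℝ}
    (hψ : ContDiffOn ℝ (⊤ : ℕ∞) (fun q : ℝ × EuclideanSpace ℝ (Fin n) => ψ q.1 q.2)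
      (Ioo 0 T ×ˢ univ))
    (hψ0 : ∀ t ∈ Ioo 0 T, ∀ x, 0 ≤ ψ t x) {x₀ : EuclideanSpace ℝ (Fin n)} {r R : ℝ} (hR : 0 < R)
    (hrR : r < R)
    (hsupp : ∀ t ∈ Ioo 0 T, ∀ x ∉ closedBall x₀ r, ψ t x = 0)
    {κ : ℝ} (hκ : ∀ t ∈ Ioo 0 T, ∀ x, deriv (fun s => ψ s x) t + heatLap (ψ t) x ≤ κ)
    {B b : ℝ} (hb0 : 0 < b) (hb : b < T) (hB : ∀ t ∈ Ioc 0 b, ∀ x, ψ t x ≤ B) (hκ0 : 0 ≤ κ) :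
    ENNReal.ofReal (∫ x, f b x * ψ b x) ≤ ENNReal.ofReal κ *
      ∫⁻ t in Ioc (0 : ℝ) 1, ∫⁻ x in ball x₀ R, ENNReal.ofReal (f t x) := by
  have hIoo : Ioo 0 T ⊆ Ioo 0 1 := Ioo_subset_Ioo_right hT
  have hball : closedBall x₀ r ⊆ ball x₀ R := closedBall_subset_ball hrR
  have key : ∀ a ∈ Ioc 0 b, ENNReal.ofReal (∫ x, f b x * ψ b x)
      ≤ ENNReal.ofReal B * (∫⁻ x in ball (0 : EuclideanSpace ℝ (Fin n)) (‖x₀‖ + R),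
          ENNReal.ofReal (f a x)) + ENNReal.ofReal κ *
      ∫⁻ t in Ioc (0 : ℝ) 1, ∫⁻ x in ball x₀ R, ENNReal.ofReal (f t x) := by
    intro a ha
    have haT : a ∈ Ioo 0 T := ⟨ha.1, ha.2.trans_lt hb⟩
    have h := integral_mul_sub_integral_mul_le (hf.contDiffOn.mono (prod_mono hIoo subset_rfl)) hψ
      (fun t ht => hf.nonneg t (hIoo ht)) hψ0 (fun t ht => hf.deriv_le t (hIoo ht)) hsupp hκ
      ha.1 ha.2 hb
    rw [sub_le_iff_le_add'] at h
    refine (ENNReal.ofReal_le_ofReal h).trans (ENNReal.ofReal_add_le.trans (add_le_add ?_ ?_))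
    · rw [← setIntegral_eq_integral_of_forall_compl_eq_zero (s := closedBall x₀ r)
        fun x hx => by rw [hsupp a haT x hx, mul_zero]]
      refine (ofReal_integral_le_lintegral _ _).trans ?_
      rw [← lintegral_const_mul' _ _ ENNReal.ofReal_ne_top]
      refine le_trans ?_ (lintegral_mono_set (hball.trans (ball_subset_ball' (ε₂ := ‖x₀‖ + R) ?_)))
      · refine lintegral_mono fun x => ?_
        have h0 := hf.nonneg a (hIoo haT) x
        simp only
        rw [← ENNReal.ofReal_mul ((hψ0 a haT x).trans (hB a ha x)),
          abs_of_nonneg (mul_nonneg h0 (hψ0 a haT x)), mul_comm]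
        exact ENNReal.ofReal_le_ofReal (mul_le_mul_of_nonneg_right (hB a ha x) h0)
      · rw [dist_zero_right, add_comm]
    · rw [ENNReal.ofReal_mul hκ0]
      gcongr
      rw [intervalIntegral.integral_of_le ha.2]
      refine (ofReal_integral_le_lintegral _ _).trans ?_
      refine le_trans ?_ (lintegral_mono_set (Ioc_subset_Ioc ha.1.le (hb.le.trans hT)))
      refine setLIntegral_mono' measurableSet_Ioc fun t ht => ?_
      have htT : t ∈ Ioo 0 1 := hIoo ⟨ha.1.trans ht.1, ht.2.trans_lt hb⟩
      rw [abs_of_nonneg (integral_nonneg fun x => hf.nonneg t htT x)]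
      refine (ofReal_integral_le_lintegral _ _).trans
        ((lintegral_mono fun x => ?_).trans (lintegral_mono_set hball))
      rw [abs_of_nonneg (hf.nonneg t htT x)]
  have hlim := (ENNReal.Tendsto.const_mul (hf.tendsto_zero (‖x₀‖ + R) (by positivity))
    (Or.inr (ENNReal.ofReal_ne_top (r := B)))).add_const (ENNReal.ofReal κ *
      ∫⁻ t in Ioc (0 : ℝ) 1, ∫⁻ x in ball x₀ R, ENNReal.ofReal (f t x))
  rw [mul_zero, zero_add] at hlim
  exact ge_of_tendsto hlim (mem_of_superset (Ioc_mem_nhdsGT hb0) key)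

/-- The `L¹` mean value inequality, with a Gaussian gain in the radius. -/
theorem exists_mean_value_inequality (n : ℕ) : ∃ K : ℝ, 0 < K ∧
    ∀ f : ℝ → EuclideanSpace ℝ (Fin n) → ℝ, IsHeatSubsolution f →
    ∀ t ∈ Ioo (0 : ℝ) 1, ∀ x₀, ∀ R > (0 : ℝ), ENNReal.ofReal (f t x₀) ≤
      ENNReal.ofReal (K * ((R ^ (n + 2))⁻¹ * Real.exp (-(R ^ 2 / 128)))) *
      ∫⁻ s in Ioc (0 : ℝ) 1, ∫⁻ x in ball x₀ R, ENNReal.ofReal (f s x) := by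
  obtain ⟨η, M, hη, hM, hη0, hη1, hin, hout, hL, hE, hL0, hE0⟩ := exists_cutoff n
  obtain ⟨K, hK, hKb⟩ := exists_backward_heat_test_le hη hM hL hE hL0 hE0
  set c : ℝ := Real.exp (-(1 / 4)) * volume.real (ball (0 : EuclideanSpace ℝ (Fin n)) 1) with hc
  have hc0 : 0 < c := mul_pos (Real.exp_pos _)
    (ENNReal.toReal_pos (measure_ball_pos _ _ one_pos).ne' measure_ball_lt_top.ne)
  refine ⟨2 / c * K, by positivity, fun f hf t ht x₀ R hR => ?_⟩
  set A := f t x₀ with hA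
  rcases (hf.nonneg t ht x₀).eq_or_lt with h0 | hApos
  · rw [hA, ← h0]
    simp
  have hcont : Continuous (f t) := (contDiff_slice hf.contDiffOn ht).continuous
  obtain ⟨δ, hδ, hδA⟩ := Metric.mem_nhds_iff.1
    (hcont.continuousAt.eventually (lt_mem_nhds (show A / 2 < f t x₀ by linarith)))
  set ε := min (min δ (R / 4) ^ 2) (1 - t) with hεdef
  have hm : 0 < min δ (R / 4) := lt_min hδ (by positivity)
  have hε : 0 < ε := lt_min (by positivity) (sub_pos.2 ht.2)
  have hsq : √ε ≤ min δ (R / 4) := Real.sqrt_le_iff.2 ⟨hm.le, min_le_left _ _⟩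
  have hT : t + ε ≤ 1 := by linarith [min_le_right (min δ (R / 4) ^ 2) (1 - t)]
  set ψ : ℝ → EuclideanSpace ℝ (Fin n) → ℝ :=
    fun s x => η (R⁻¹ • (x - x₀)) * gaussKernel x₀ (t + ε - s) x with hψdef
  have hnorm : ∀ x, ‖R⁻¹ • (x - x₀)‖ = ‖x - x₀‖ / R := fun x => by
    rw [norm_smul, norm_inv, Real.norm_of_nonneg hR.le, inv_mul_eq_div]
  have hψ : ContDiffOn ℝ (⊤ : ℕ∞) (fun q : ℝ × EuclideanSpace ℝ (Fin n) => ψ q.1 q.2)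
      (Ioo 0 (t + ε) ×ˢ univ) := by
    refine ContDiffOn.mul ?_ ?_
    · exact (hη.comp ((contDiff_snd.sub contDiff_const).const_smul _)).contDiffOn
    · exact (contDiffOn_gaussKernel x₀).comp (f := fun q : ℝ × EuclideanSpace ℝ (Fin n) => (t + ε - q.1, q.2))
        ((contDiff_const.sub contDiff_fst).prodMk contDiff_snd).contDiffOn
        fun q hq => ⟨sub_pos.2 hq.1.2, mem_univ _⟩
  have hψ0 : ∀ s ∈ Ioo 0 (t + ε), ∀ x, 0 ≤ ψ s x := fun s hs x =>
    mul_nonneg (hη0 _) (gaussKernel_nonneg _ (sub_pos.2 hs.2) _)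
  have hsupp : ∀ s ∈ Ioo 0 (t + ε), ∀ x ∉ closedBall x₀ (R / 2), ψ s x = 0 := by
    intro s _ x hx
    rw [mem_closedBall_iff_norm, not_le] at hx
    simp only [hψdef]
    rw [hout, zero_mul]
    rw [hnorm, le_div_iff₀ hR]
    linarith
  have hB : ∀ s ∈ Ioc 0 t, ∀ x, ψ s x ≤ ε ^ (-(n / 2 : ℝ)) := by
    intro s hs x
    have h1 : ε ≤ t + ε - s := by linarith [hs.2]
    have h2 : 0 < t + ε - s := hε.trans_le h1
    calc ψ s x ≤ 1 * gaussKernel x₀ (t + ε - s) x :=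
          mul_le_mul_of_nonneg_right (hη1 _) (gaussKernel_nonneg _ h2 _)
      _ ≤ (t + ε - s) ^ (-(n / 2 : ℝ)) * 1 := by
          rw [one_mul]
          refine mul_le_mul_of_nonneg_left (Real.exp_le_one_iff.2 ?_) (by positivity)
          rw [neg_nonpos]
          positivity
      _ ≤ ε ^ (-(n / 2 : ℝ)) := by
          rw [mul_one]
          exact Real.rpow_le_rpow_of_nonpos hε h1 (by simp; positivity)
  have htT : t ∈ Ioo 0 (t + ε) := ⟨ht.1, by linarith⟩
  have hupper := ofReal_integral_mul_le_of_test hf hT hψ hψ0 hR (half_lt_self hR) hsupp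
    (hKb R (t + ε) hR hT x₀) ht.1 htT.2 hB (by positivity)
  have hlower : A / 2 * c ≤ ∫ x, f t x * ψ t x := by
    refine le_integral_mul_of_gaussKernel_le (x₀ := x₀) (half_pos hApos).le hε ?_
      (fun x => mul_nonneg (hf.nonneg t ht x) (hψ0 t htT x)) fun x hx => ?_
    · exact (hcont.mul (contDiff_slice hψ htT).continuous).integrable_of_hasCompactSupport
        (HasCompactSupport.intro (isCompact_closedBall x₀ (R / 2)) fun x hx => by
          simp [hsupp t htT x hx])
    · have hx' := hx
      rw [mem_ball_iff_norm] at hx'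
      have h1 : η (R⁻¹ • (x - x₀)) = 1 := by
        apply hin
        rw [hnorm, div_le_iff₀ hR]
        linarith [hsq.trans (min_le_right _ _)]
      simp only [hψdef, h1, one_mul, add_sub_cancel_left]
      exact mul_le_mul_of_nonneg_right
        (hδA (ball_subset_ball (hsq.trans (min_le_left _ _)) hx)).le
        (gaussKernel_nonneg _ hε _)
  calc ENNReal.ofReal A = ENNReal.ofReal (2 / c) * ENNReal.ofReal (A / 2 * c) := by
        rw [← ENNReal.ofReal_mul (by positivity)]
        congr 1
        field_simp
    _ ≤ ENNReal.ofReal (2 / c) * _ :=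
        mul_le_mul_right ((ENNReal.ofReal_le_ofReal hlower).trans hupper) _
    _ = _ := by
        rw [← mul_assoc, ← ENNReal.ofReal_mul (by positivity), mul_assoc (2 / c)]

theorem tendsto_lintegral_ofReal_of_sq {α ι : Type*} [MeasurableSpace α] {μ : Measure α}
    [IsFiniteMeasure μ] {l : Filter ι} {u : ι → α → ℝ}
    (h : Tendsto (fun i => ∫⁻ x, ENNReal.ofReal (u i x ^ 2) ∂μ) l (nhds 0)) :
    Tendsto (fun i => ∫⁻ x, ENNReal.ofReal (u i x) ∂μ) l (nhds 0) := by
  have key : ∀ δ : ℝ, 0 < δ → ∀ i, ∫⁻ x, ENNReal.ofReal (u i x) ∂μ ≤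
      ENNReal.ofReal δ * μ univ + ENNReal.ofReal δ⁻¹ * ∫⁻ x, ENNReal.ofReal (u i x ^ 2) ∂μ := by
    intro δ hδ i
    rw [← lintegral_const_mul' _ _ ENNReal.ofReal_ne_top, ← lintegral_const (ENNReal.ofReal δ),
      ← lintegral_add_left measurable_const]
    refine lintegral_mono fun x => ?_
    simp only
    rw [← ENNReal.ofReal_mul (by positivity), ← ENNReal.ofReal_add hδ.le (by positivity)]
    refine ENNReal.ofReal_le_ofReal ?_
    rw [inv_mul_eq_div, ← sub_le_iff_le_add', le_div_iff₀ hδ]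
    nlinarith [sq_nonneg (u i x - δ), sq_nonneg (u i x), sq_nonneg δ]
  rw [ENNReal.tendsto_nhds_zero]
  intro ε hε
  obtain ⟨ε', hε', hεε⟩ : ∃ ε' : ℝ, 0 < ε' ∧ ENNReal.ofReal ε' ≤ ε := by
    obtain ⟨r, hr0, hr⟩ := ENNReal.lt_iff_exists_nnreal_btwn.1 hε
    exact ⟨r, by exact_mod_cast hr0, by simpa using hr.le⟩
  set m := (μ univ).toReal with hm
  have hm0 : 0 ≤ m := ENNReal.toReal_nonneg
  set δ := ε' / 2 / (m + 1) with hδdef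
  have hδ : 0 < δ := by positivity
  have hδm : ENNReal.ofReal δ * μ univ ≤ ENNReal.ofReal (ε' / 2) := by
    rw [← ENNReal.ofReal_toReal (measure_ne_top μ univ), ← ENNReal.ofReal_mul hδ.le]
    refine ENNReal.ofReal_le_ofReal ?_
    rw [← hm, hδdef, div_mul_eq_mul_div, div_le_iff₀ (by positivity)]
    nlinarith
  have hlim := ENNReal.Tendsto.const_mul h (Or.inr (ENNReal.ofReal_ne_top (r := δ⁻¹)))
  rw [mul_zero, ENNReal.tendsto_nhds_zero] at hlim
  filter_upwards [hlim (ENNReal.ofReal (ε' / 2)) (by simpa using hε')] with i hi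
  calc _ ≤ _ := key δ hδ i
    _ ≤ ENNReal.ofReal (ε' / 2) + ENNReal.ofReal (ε' / 2) := add_le_add hδm hi
    _ = ENNReal.ofReal ε' := by
      rw [← ENNReal.ofReal_add (by positivity) (by positivity), add_halves]
    _ ≤ ε := hεε

theorem IsHeatSubsolution.lintegral_lt_top {f : ℝ → EuclideanSpace ℝ (Fin n) → ℝ}
    (hf : IsHeatSubsolution f)
    (hcont : ContinuousOn (fun q : ℝ × EuclideanSpace ℝ (Fin n) => f q.1 q.2)
      (Ioc 0 1 ×ˢ univ)) {r : ℝ} (hr : 0 < r) :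
    ∫⁻ t in Ioc (0 : ℝ) 1, ∫⁻ x in ball (0 : EuclideanSpace ℝ (Fin n)) r, ENNReal.ofReal (f t x)
      < ⊤ := by
  obtain ⟨δ, hδ, hδ1⟩ := (mem_nhdsGT_iff_exists_Ioc_subset).1
    ((hf.tendsto_zero r hr).eventually (Iic_mem_nhds zero_lt_one))
  have hK : IsCompact (Icc δ 1 ×ˢ closedBall (0 : EuclideanSpace ℝ (Fin n)) r) :=
    isCompact_Icc.prod (isCompact_closedBall _ _)
  obtain ⟨M, hM⟩ := hK.bddAbove_image (hcont.mono (prod_mono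
    (fun t ht => ⟨lt_of_lt_of_le hδ ht.1, ht.2⟩) (subset_univ _)))
  have hsub : Ioc (0 : ℝ) 1 ⊆ Ioc 0 δ ∪ Icc δ 1 := fun t ht =>
    (le_total t δ).imp (fun h => ⟨ht.1, h⟩) fun h => ⟨h, ht.2⟩
  refine ((lintegral_mono_set hsub).trans (lintegral_union_le _ _ _)).trans_lt
    (ENNReal.add_lt_top.2 ⟨?_, ?_⟩)
  · refine (setLIntegral_mono' (g := fun _ => 1) measurableSet_Ioc fun t ht => hδ1 ht).trans_lt ?_
    simp
  · refine (setLIntegral_mono' (g := fun _ => ENNReal.ofReal M *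
      volume (ball (0 : EuclideanSpace ℝ (Fin n)) r)) measurableSet_Icc fun t ht => ?_).trans_lt ?_
    · rw [← setLIntegral_const]
      exact setLIntegral_mono' measurableSet_ball fun x hx => ENNReal.ofReal_le_ofReal
        (hM ⟨(t, x), ⟨ht, ball_subset_closedBall hx⟩, rfl⟩)
    · rw [setLIntegral_const]
      exact ENNReal.mul_lt_top (ENNReal.mul_lt_top ENNReal.ofReal_lt_top measure_ball_lt_top)
        measure_Icc_lt_top

theorem IsHeatSubsolution.exists_forall_le {f : ℝ → EuclideanSpace ℝ (Fin n) → ℝ}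
    (hf : IsHeatSubsolution f)
    (hcont : ContinuousOn (fun q : ℝ × EuclideanSpace ℝ (Fin n) => f q.1 q.2)
      (Ioc 0 1 ×ˢ univ)) {r : ℝ} (hr : 0 < r) :
    ∃ M, ∀ t ∈ Ioo (0 : ℝ) 1, ∀ x ∈ ball (0 : EuclideanSpace ℝ (Fin n)) r, f t x ≤ M := by
  obtain ⟨K, hK, hmv⟩ := exists_mean_value_inequality n
  have hfin := hf.lintegral_lt_top hcont (r := r + 1) (by positivity)
  refine ⟨_, fun t ht x hx => (ENNReal.ofReal_le_iff_le_toReal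
    (ENNReal.mul_lt_top ENNReal.ofReal_lt_top hfin).ne).1
    ((hmv f hf t ht x 1 one_pos).trans (mul_le_mul_right ?_ _))⟩
  refine lintegral_mono fun s => lintegral_mono_set (ball_subset_ball' ?_)
  linarith [mem_ball.1 hx]

/-- The `Lᵖ` mean value inequality on a ball, for `0 < p ≤ 1`. -/
theorem exists_rpow_mean_value_inequality (n : ℕ) {p : ℝ} (hp0 : 0 < p) (hp1 : p ≤ 1) :
    ∃ K : ℝ, 0 < K ∧ ∀ f : ℝ → EuclideanSpace ℝ (Fin n) → ℝ, IsHeatSubsolution f →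
    ContinuousOn (fun q : ℝ × EuclideanSpace ℝ (Fin n) => f q.1 q.2) (Ioc 0 1 ×ˢ univ) →
    ∀ ρ > (0 : ℝ), ∀ J > (0 : ℝ),
    ∫⁻ t in Ioc (0 : ℝ) 1, ∫⁻ x in ball (0 : EuclideanSpace ℝ (Fin n)) ρ,
        ENNReal.ofReal (f t x ^ p) ≤ ENNReal.ofReal J →
    ∀ t ∈ Ioo (0 : ℝ) 1, ∀ x ∈ ball (0 : EuclideanSpace ℝ (Fin n)) ρ,
      f t x * (ρ - ‖x‖) ^ ((n + 2) / p) ≤ (K * J) ^ (1 / p) := by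
  obtain ⟨K, hK, hmv⟩ := exists_mean_value_inequality n
  set N : ℝ := (n + 2) / p with hN
  have hN0 : 0 < N := by positivity
  have hNp : N * p = n + 2 := div_mul_cancel₀ _ hp0.ne'
  have hq : 0 ≤ 1 - p := sub_nonneg.2 hp1
  refine ⟨K * 2 ^ (n + 2) * ((2 : ℝ) ^ N) ^ (1 - p), by positivity,
    fun f hf hcont ρ hρ J hJ hI => ?_⟩
  set E : Set ℝ := {v | ∃ t ∈ Ioo (0 : ℝ) 1, ∃ x ∈ ball (0 : EuclideanSpace ℝ (Fin n)) ρ,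
    v = f t x * (ρ - ‖x‖) ^ N} with hE
  have hdist : ∀ x ∈ ball (0 : EuclideanSpace ℝ (Fin n)) ρ, 0 < ρ - ‖x‖ := fun x hx =>
    sub_pos.2 (mem_ball_zero_iff.1 hx)
  obtain ⟨S, hS⟩ : ∃ S, IsLUB E S := by
    refine Real.exists_isLUB ⟨_, 1 / 2, by norm_num, 0, mem_ball_self hρ, rfl⟩ ?_
    obtain ⟨M, hM⟩ := hf.exists_forall_le hcont hρ
    refine ⟨M * ρ ^ N, ?_⟩
    rintro _ ⟨t, ht, x, hx, rfl⟩
    have hd := hdist x hx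
    exact mul_le_mul (hM t ht x hx) (Real.rpow_le_rpow hd.le (by simp) hN0.le) (by positivity)
      ((hf.nonneg t ht x).trans (hM t ht x hx))
  have hle : ∀ t ∈ Ioo (0 : ℝ) 1, ∀ x ∈ ball (0 : EuclideanSpace ℝ (Fin n)) ρ,
      f t x * (ρ - ‖x‖) ^ N ≤ S := fun t ht x hx => hS.1 ⟨t, ht, x, hx, rfl⟩
  have hS0 : 0 ≤ S := by
    refine le_trans ?_ (hle (1 / 2) (by norm_num) 0 (mem_ball_self hρ))
    exact mul_nonneg (hf.nonneg _ (by norm_num) _)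
      (Real.rpow_nonneg (hdist 0 (mem_ball_self hρ)).le _)
  have hself : S ≤ K * 2 ^ (n + 2) * ((2 : ℝ) ^ N) ^ (1 - p) * J * S ^ (1 - p) := by
    refine hS.2 ?_
    rintro _ ⟨t, ht, x, hx, rfl⟩
    set d := ρ - ‖x‖ with hd
    have hd0 : 0 < d := hdist x hx
    set b : ℝ := (S * (2 / d) ^ N) ^ (1 - p) with hb
    have hb0 : 0 ≤ b := by positivity
    have hball : ball x (d / 2) ⊆ ball 0 ρ := ball_subset_ball' (by
      rw [dist_zero_right]; linarith)
    have hpt : ∀ s ∈ Ioo (0 : ℝ) 1, ∀ y ∈ ball x (d / 2), f s y ≤ b * f s y ^ p := by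
      intro s hs y hy
      have h0 := hf.nonneg s hs y
      have hdy : d / 2 ≤ ρ - ‖y‖ := by
        have h1 := mem_ball_iff_norm.1 hy
        have h2 := norm_le_norm_add_norm_sub' y x
        linarith
      have h1 : f s y ≤ S * (2 / d) ^ N := by
        have h2 : f s y * (d / 2) ^ N ≤ S := (mul_le_mul_of_nonneg_left
          (Real.rpow_le_rpow (by positivity) hdy hN0.le) h0).trans (hle s hs y (hball hy))
        rw [← inv_div d 2, Real.inv_rpow (by positivity), ← div_eq_mul_inv,
          le_div_iff₀ (by positivity)]
        exact h2
      calc f s y = f s y ^ (1 - p) * f s y ^ p := by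
            rw [← Real.rpow_add' h0 (by simp), sub_add_cancel, Real.rpow_one]
        _ ≤ b * f s y ^ p := mul_le_mul_of_nonneg_right (Real.rpow_le_rpow h0 h1 hq)
            (Real.rpow_nonneg h0 _)
    have hint : ∫⁻ s in Ioc (0 : ℝ) 1, ∫⁻ y in ball x (d / 2), ENNReal.ofReal (f s y)
        ≤ ENNReal.ofReal (b * J) := by
      rw [ENNReal.ofReal_mul hb0]
      refine le_trans ?_ (mul_le_mul_right hI _)
      rw [← lintegral_const_mul' _ _ ENNReal.ofReal_ne_top,
        ← restrict_Ioo_eq_restrict_Ioc]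
      refine setLIntegral_mono' measurableSet_Ioo fun s hs => ?_
      rw [← lintegral_const_mul' _ _ ENNReal.ofReal_ne_top]
      refine le_trans ?_ (lintegral_mono_set hball)
      refine setLIntegral_mono' measurableSet_ball fun y hy => ?_
      rw [← ENNReal.ofReal_mul hb0]
      exact ENNReal.ofReal_le_ofReal (hpt s hs y hy)
    have hmain : f t x ≤ K * (((d / 2) ^ (n + 2))⁻¹ * Real.exp (-((d / 2) ^ 2 / 128))) *
        (b * J) := by
      rw [← ENNReal.ofReal_le_ofReal_iff (by positivity), ENNReal.ofReal_mul (by positivity)]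
      exact (hmv f hf t ht x (d / 2) (by positivity)).trans (mul_le_mul_right hint _)
    have hexp : Real.exp (-((d / 2) ^ 2 / 128)) ≤ 1 := Real.exp_le_one_iff.2 (by
      rw [neg_nonpos]; positivity)
    have hdN : d ^ N = d ^ (n + 2) * (d ^ N) ^ (1 - p) := by
      rw [← Real.rpow_mul hd0.le, ← Real.rpow_natCast, ← Real.rpow_add hd0]
      congr 1
      push_cast
      linarith
    have hbe : b = S ^ (1 - p) * (((2 : ℝ) ^ N) ^ (1 - p) / (d ^ N) ^ (1 - p)) := by
      rw [hb, Real.mul_rpow hS0 (by positivity), Real.div_rpow (by positivity) hd0.le,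
        Real.div_rpow (by positivity) (by positivity)]
    calc f t x * d ^ N ≤ K * (((d / 2) ^ (n + 2))⁻¹ * 1) * (b * J) * d ^ N := by
          refine mul_le_mul_of_nonneg_right (hmain.trans ?_) (by positivity)
          gcongr
      _ = _ := by
          have h1 : 0 < (d ^ N) ^ (1 - p) := by positivity
          rw [hdN, hbe, div_pow]
          field_simp
  have hSle : S ≤ (K * 2 ^ (n + 2) * ((2 : ℝ) ^ N) ^ (1 - p) * J) ^ (1 / p) := by
    rcases hS0.eq_or_lt with h0 | hSpos
    · rw [← h0]
      positivity
    · rw [one_div, Real.le_rpow_inv_iff_of_pos hS0 (by positivity) hp0]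
      refine le_of_mul_le_mul_right ?_ (Real.rpow_pos_of_pos hSpos (1 - p))
      rwa [← Real.rpow_add hSpos, add_sub_cancel, Real.rpow_one]
  exact fun t ht x hx => (hle t ht x hx).trans hSle

theorem IsHeatSubsolution.exists_le_exp {f : ℝ → EuclideanSpace ℝ (Fin n) → ℝ}
    (hf : IsHeatSubsolution f)
    (hcont : ContinuousOn (fun q : ℝ × EuclideanSpace ℝ (Fin n) => f q.1 q.2) (Ioc 0 1 ×ˢ univ))
    {p : ℝ} (hp0 : 0 < p) (hp1 : p ≤ 1) {C : ℝ}
    (hgrowth : ∀ r > (0 : ℝ),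
      (∫⁻ t in Ioc (0 : ℝ) 1, ∫⁻ x in ball (0 : EuclideanSpace ℝ (Fin n)) r,
        ENNReal.ofReal (f t x ^ p)) ^ (1 / p) ≤ ENNReal.ofReal (Real.exp (C * r))) :
    ∃ A > (0 : ℝ), ∀ t ∈ Ioo (0 : ℝ) 1, ∀ x, f t x ≤ A * Real.exp (|C| * ‖x‖) := by
  obtain ⟨K, hK, hmv⟩ := exists_rpow_mean_value_inequality n hp0 hp1
  refine ⟨K ^ (1 / p) * Real.exp |C|, by positivity, fun t ht x => ?_⟩
  have hρ : 0 < ‖x‖ + 1 := by positivity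
  have h := hmv f hf hcont (‖x‖ + 1) hρ (Real.exp (C * (‖x‖ + 1)) ^ p) (by positivity) ?_ t ht x
    (mem_ball_zero_iff.2 (lt_add_one _))
  · rw [add_sub_cancel_left, Real.one_rpow, mul_one, Real.mul_rpow hK.le (by positivity),
      ← Real.rpow_mul (Real.exp_pos _).le, mul_one_div_cancel hp0.ne', Real.rpow_one] at h
    refine h.trans ?_
    rw [mul_assoc, ← Real.exp_add]
    gcongr
    nlinarith [le_abs_self C]
  · rw [← ENNReal.ofReal_rpow_of_pos (Real.exp_pos _)]
    refine le_trans (le_of_eq ?_) (ENNReal.rpow_le_rpow (hgrowth _ hρ) hp0.le)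
    rw [← ENNReal.rpow_mul, one_div_mul_cancel hp0.ne', ENNReal.rpow_one]

theorem IsHeatSubsolution.eq_zero_of_le_exp {f : ℝ → EuclideanSpace ℝ (Fin n) → ℝ}
    (hf : IsHeatSubsolution f) {A c : ℝ} (hA : 0 < A) (hc : 0 ≤ c)
    (hle : ∀ t ∈ Ioo (0 : ℝ) 1, ∀ x, f t x ≤ A * Real.exp (c * ‖x‖)) {t : ℝ}
    (ht : t ∈ Ioo (0 : ℝ) 1) (x : EuclideanSpace ℝ (Fin n)) : f t x = 0 := by
  obtain ⟨K, hK, hmv⟩ := exists_mean_value_inequality n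
  refine le_antisymm ?_ (hf.nonneg t ht x)
  set v : ℝ := volume.real (ball (0 : EuclideanSpace ℝ (Fin n)) 1) with hv
  have hbound : ∀ R : ℝ, 1 ≤ R → f t x ≤
      K * ((R ^ (n + 2))⁻¹ * Real.exp (-(R ^ 2 / 128))) *
        (A * Real.exp (c * (‖x‖ + R)) * (R ^ n * v)) := by
    intro R hR
    have hR0 : 0 < R := one_pos.trans_le hR
    rw [← ENNReal.ofReal_le_ofReal_iff (by positivity), ENNReal.ofReal_mul (by positivity)]
    refine (hmv f hf t ht x R hR0).trans (mul_le_mul_right ?_ _)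
    have hvol : volume (ball x R) = ENNReal.ofReal (R ^ n * v) := by
      rw [Measure.addHaar_ball_of_pos _ _ hR0, finrank_euclideanSpace_fin,
        ENNReal.ofReal_mul (by positivity), hv, ofReal_measureReal]
    have hin : ∀ s ∈ Ioo (0 : ℝ) 1, ∫⁻ y in ball x R, ENNReal.ofReal (f s y)
        ≤ ENNReal.ofReal (A * Real.exp (c * (‖x‖ + R)) * (R ^ n * v)) := by
      intro s hs
      rw [ENNReal.ofReal_mul (by positivity), ← hvol, ← setLIntegral_const]
      refine setLIntegral_mono' measurableSet_ball fun y hy => ENNReal.ofReal_le_ofReal ?_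
      refine (hle s hs y).trans ?_
      gcongr
      have h1 := mem_ball_iff_norm.1 hy
      have h2 := norm_le_norm_add_norm_sub' y x
      linarith
    rw [← restrict_Ioo_eq_restrict_Ioc]
    refine (setLIntegral_mono' measurableSet_Ioo hin).trans ?_
    simp
  have hbound' : ∀ R : ℝ, max 1 (128 * (c + 1)) ≤ R →
      f t x ≤ K * A * v * Real.exp (c * ‖x‖) * Real.exp (-R) := by
    intro R hR
    have hR1 : 1 ≤ R := (le_max_left _ _).trans hR
    have hR2 : 128 * (c + 1) ≤ R := (le_max_right _ _).trans hR
    have hR0 : 0 < R := one_pos.trans_le hR1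
    refine (hbound R hR1).trans ?_
    calc K * ((R ^ (n + 2))⁻¹ * Real.exp (-(R ^ 2 / 128))) *
          (A * Real.exp (c * (‖x‖ + R)) * (R ^ n * v))
        = K * A * v * (R ^ 2)⁻¹ * (Real.exp (-(R ^ 2 / 128)) * Real.exp (c * (‖x‖ + R))) := by
          rw [pow_add]
          field_simp
      _ ≤ K * A * v * 1 * (Real.exp (c * ‖x‖) * Real.exp (-R)) := by
          rw [← Real.exp_add, ← Real.exp_add]
          refine mul_le_mul (mul_le_mul_of_nonneg_left
            (inv_le_one_of_one_le₀ (one_le_pow₀ hR1)) (by positivity))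
            (Real.exp_le_exp.2 ?_) (by positivity) (by positivity)
          nlinarith
      _ = _ := by ring
  have hlim : Tendsto (fun R : ℝ => K * A * v * Real.exp (c * ‖x‖) * Real.exp (-R)) atTop
      (nhds 0) := by
    simpa using Real.tendsto_exp_neg_atTop_nhds_zero.const_mul
      (K * A * v * Real.exp (c * ‖x‖))
  exact ge_of_tendsto hlim (eventually_atTop.2 ⟨_, hbound'⟩)

end

/-- **Theorem 2 (Euclidean case).** Let `0 < p ≤ 1`. A nonnegative smooth subsolution
of the heat equation on `ℝⁿ × (0,1]` with zero initial data in `L²_loc` and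
`‖f‖_{Lᵖ(B(0,r)×[0,1])} ≤ e^{C r}` for all `r > 0` vanishes identically. -/
theorem heat_uniqueness_Lp {n : ℕ} (p : ℝ) (hp0 : 0 < p) (hp1 : p ≤ 1)
    (f : ℝ → EuclideanSpace ℝ (Fin n) → ℝ)
    (hf_smooth : ContDiffOn ℝ (⊤ : ℕ∞)
      (fun q : ℝ × EuclideanSpace ℝ (Fin n) => f q.1 q.2) (Set.Ioc (0:ℝ) 1 ×ˢ Set.univ))
    (hf_nonneg : ∀ t ∈ Set.Ioc (0:ℝ) 1, ∀ x, 0 ≤ f t x)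
    (hf_subsol : ∀ t ∈ Set.Ioc (0:ℝ) 1, ∀ x, deriv (fun s => f s x) t ≤ heatLap (f t) x)
    (hf_init : ∀ R > (0:ℝ),
      Tendsto (fun t => ∫⁻ x in ball (0 : EuclideanSpace ℝ (Fin n)) R,
        ENNReal.ofReal ((f t x) ^ 2)) (nhdsWithin 0 (Set.Ioi 0)) (nhds 0))
    (C : ℝ)
    (hf_growth : ∀ r > (0:ℝ),
      (∫⁻ t in Set.Ioc (0:ℝ) 1, ∫⁻ x in ball (0 : EuclideanSpace ℝ (Fin n)) r,
        ENNReal.ofReal ((f t x) ^ p)) ^ (1 / p)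
      ≤ ENNReal.ofReal (Real.exp (C * r))) :
    ∀ t ∈ Set.Ioc (0:ℝ) 1, ∀ x, f t x = 0 := by
  have hsub : Ioo (0 : ℝ) 1 ⊆ Ioc 0 1 := Ioo_subset_Ioc_self
  have hf : IsHeatSubsolution f :=
    { contDiffOn := hf_smooth.mono (prod_mono hsub subset_rfl)
      nonneg := fun t ht => hf_nonneg t (hsub ht)
      deriv_le := fun t ht => hf_subsol t (hsub ht)
      tendsto_zero := fun R hR =>
        have : IsFiniteMeasure (volume.restrict (ball (0 : EuclideanSpace ℝ (Fin n)) R)) :=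
          ⟨by simpa using measure_ball_lt_top⟩
        tendsto_lintegral_ofReal_of_sq (hf_init R hR) }
  have hcont := hf_smooth.continuousOn
  obtain ⟨A, hA, hle⟩ := hf.exists_le_exp hcont hp0 hp1 hf_growth
  have hzero : ∀ t ∈ Ioo (0 : ℝ) 1, ∀ x, f t x = 0 := fun t ht x =>
    hf.eq_zero_of_le_exp hA (abs_nonneg C) hle ht x
  intro t ht x
  rcases ht.2.lt_or_eq with h1 | rfl
  · exact hzero t ⟨ht.1, h1⟩ x
  · have hline : ContinuousOn (fun s => f s x) (Ioc 0 1) :=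
      hcont.comp (f := fun s => (s, x)) (by fun_prop) fun s hs => ⟨hs, mem_univ _⟩
    have hlim : Tendsto (fun s => f s x) (nhdsWithin 1 (Ioo 0 1)) (nhds (f 1 x)) :=
      (hline 1 ht).mono_left (nhdsWithin_mono _ hsub)
    have : (nhdsWithin (1 : ℝ) (Ioo 0 1)).NeBot := right_nhdsWithin_Ioo_neBot one_pos
    exact tendsto_nhds_unique hlim (tendsto_const_nhds.congr'
      (eventually_nhdsWithin_of_forall fun s hs => (hzero s hs x).symm))
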